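/- arXiv:1210.4950 — 10 statements merged into one kernel-verified Lean document; each statement's English description precedes it below -/
import Mathlib

section
/- For every real α > 0, the function φ_α(r) = ((1+α²)/(r²+α²))^{1/2} satisfies the radial Lichnerowicz–York equation φ''(r) + (2/r)·φ'(r) + 2π·ρ(α)·φ(r)^5 = 0 for all r ∈ (0,1], where ρ(α) = (3/(2π))·(α/(1+α²))², and moreover φ_α(1) = 1, φ_α'(0) = 0 (the derivative of φ_α at r = 0 exists and equals 0), and φ_α(r) ≥ 1 for all r ∈ [0,1]. -/
/-- The one-parameter family of conformal factors
`φ_α(r) = ((1+α²)/(r²+α²))^{1/2}`. -/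
noncomputable def phiLY (α r : ℝ) : ℝ := Real.sqrt ((1 + α ^ 2) / (r ^ 2 + α ^ 2))

/-- The energy density `ρ(α) = (3/(2π))·(α/(1+α²))²`. -/
noncomputable def rhoLY (α : ℝ) : ℝ := 3 / (2 * Real.pi) * (α / (1 + α ^ 2)) ^ 2

/-- For every `α > 0`, `φ_α` solves the radial Lichnerowicz–York equation
`φ'' + (2/r)φ' + 2πρ(α)φ⁵ = 0` on `(0,1]`, satisfies the boundary conditions
`φ_α(1) = 1` and `φ_α'(0) = 0`, and satisfies `φ_α(r) ≥ 1` on `[0,1]`. -/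
theorem lichnerowicz_york_solution_family (α : ℝ) (hα : 0 < α) :
    (∀ r ∈ Set.Ioc (0 : ℝ) 1,
      deriv (deriv (phiLY α)) r + (2 / r) * deriv (phiLY α) r
        + 2 * Real.pi * rhoLY α * phiLY α r ^ 5 = 0) ∧
    phiLY α 1 = 1 ∧
    HasDerivAt (phiLY α) 0 0 ∧
    (∀ r ∈ Set.Icc (0 : ℝ) 1, 1 ≤ phiLY α r) := by
  have h0 : ∀ r : ℝ, 0 < r ^ 2 + α ^ 2 := fun r => by positivity
  have hq : ∀ r : ℝ, 0 < (1 + α ^ 2) / (r ^ 2 + α ^ 2) := fun r => by positivity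
  have hsq : ∀ r : ℝ, phiLY α r ^ 2 = (1 + α ^ 2) / (r ^ 2 + α ^ 2) := fun r =>
    Real.sq_sqrt (hq r).le
  have hpos : ∀ r : ℝ, 0 < phiLY α r := fun r => Real.sqrt_pos.mpr (hq r)
  have hD : ∀ r : ℝ, HasDerivAt (fun x : ℝ => x ^ 2 + α ^ 2) (2 * r) r := fun r => by
    simpa using (hasDerivAt_pow 2 r).add_const (α ^ 2)
  have h1 : ∀ r : ℝ, HasDerivAt (phiLY α) (-r / (r ^ 2 + α ^ 2) * phiLY α r) r := by
    intro r
    have h := (((hasDerivAt_const r (1 + α ^ 2)).fun_div (hD r) (h0 r).ne').sqrt (hq r).ne')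
    refine h.congr_deriv ?_
    change _ / (2 * phiLY α r) = _
    have hp := (hpos r).ne'
    have hd := (h0 r).ne'
    rw [div_eq_iff (by positivity)]
    have e : -r / (r ^ 2 + α ^ 2) * phiLY α r * (2 * phiLY α r)
      = -r / (r ^ 2 + α ^ 2) * 2 * phiLY α r ^ 2 := by ring
    rw [e, hsq]
    field_simp
    ring
  have hd1 : deriv (phiLY α) = fun r => -r / (r ^ 2 + α ^ 2) * phiLY α r :=
    funext fun r => (h1 r).deriv
  refine ⟨?_, ?_, ?_, ?_⟩
  · intro r hr
    have hr0 : r ≠ 0 := hr.1.ne'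
    have hd := (h0 r).ne'
    have h2 := (((hasDerivAt_id' r).fun_neg.fun_div (hD r) hd).fun_mul (h1 r)).deriv
    rw [hd1, h2]
    have e : phiLY α r ^ 5 = (phiLY α r ^ 2) ^ 2 * phiLY α r := by ring
    rw [e, hsq, rhoLY]
    have hpi := Real.pi_ne_zero
    have ha : 1 + α ^ 2 ≠ 0 := by positivity
    field_simp
    ring
  · have : (1 + α ^ 2) ≠ 0 := by positivity
    simp [phiLY, this]
  · simpa using h1 0
  · intro r hr
    rw [phiLY, Real.one_le_sqrt, one_le_div (h0 r)]
    nlinarith [hr.1, hr.2]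
end

section
/- The function θ₁(r) = (1−r²)/(1+r²)^{3/2} satisfies θ₁''(r) + (2/r)·θ₁'(r) + (15/(1+r²)²)·θ₁(r) = 0 for all r ∈ (0,1], together with θ₁(1) = 0, θ₁'(0) = 0 (the derivative of θ₁ at r = 0 exists and equals 0), and θ₁(r) > 0 for all r ∈ [0,1). In other words, θ₁ is a zero-eigenvalue eigenfunction (the principal eigenfunction) of the linearization of the radial Lichnerowicz–York equation at the critical solution α = 1. -/
/-- The principal eigenfunction `θ₁(r) = (1−r²)/(1+r²)^{3/2}` of the linearization
at the critical solution `α = 1`. -/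
noncomputable def theta1 (r : ℝ) : ℝ := (1 - r ^ 2) / (1 + r ^ 2) ^ ((3 : ℝ) / 2)

lemma theta1_aux_pow (p r : ℝ) :
    HasDerivAt (fun x : ℝ => (1 + x ^ 2) ^ p) (2 * r * p * (1 + r ^ 2) ^ (p - 1)) r := by
  have h : HasDerivAt (fun x : ℝ => 1 + x ^ 2) (2 * r) r := by
    simpa using (hasDerivAt_pow 2 r).const_add 1
  exact h.rpow_const (Or.inl (by positivity))

lemma theta1_aux_eq (r : ℝ) : theta1 r = (1 - r ^ 2) * (1 + r ^ 2) ^ (-(3 / 2) : ℝ) := by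
  rw [theta1, Real.rpow_neg (by positivity), div_eq_mul_inv]

lemma theta1_aux_succ (p r : ℝ) :
    (1 + r ^ 2) ^ p = (1 + r ^ 2) ^ (p - 1) * (1 + r ^ 2) := by
  have h : (0 : ℝ) < 1 + r ^ 2 := by positivity
  rw [Real.rpow_sub_one h.ne', div_mul_cancel₀ _ h.ne']

lemma theta1_aux_d1 (r : ℝ) :
    HasDerivAt theta1 ((r ^ 3 - 5 * r) * (1 + r ^ 2) ^ (-(5 / 2) : ℝ)) r := by
  have h1 : HasDerivAt (fun x : ℝ => 1 - x ^ 2) (-(2 * r)) r := by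
    simpa using (hasDerivAt_pow 2 r).const_sub 1
  have h := h1.mul (theta1_aux_pow (-(3 / 2)) r)
  rw [show theta1 = fun x => (1 - x ^ 2) * (1 + x ^ 2) ^ (-(3 / 2) : ℝ) from
    funext theta1_aux_eq]
  refine h.congr_deriv ?_
  rw [theta1_aux_succ (-(3 / 2)) r, show (-(3 / 2) - 1 : ℝ) = -(5 / 2) by norm_num]
  ring

lemma theta1_aux_d2 (r : ℝ) :
    HasDerivAt (deriv theta1)
      ((-2 * r ^ 4 + 23 * r ^ 2 - 5) * (1 + r ^ 2) ^ (-(7 / 2) : ℝ)) r := by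
  have h1 : HasDerivAt (fun x : ℝ => x ^ 3 - 5 * x) (3 * r ^ 2 - 5) r := by
    refine ((hasDerivAt_pow 3 r).sub ((hasDerivAt_id r).const_mul 5)).congr_deriv ?_
    norm_num
  have h := h1.mul (theta1_aux_pow (-(5 / 2)) r)
  rw [show deriv theta1 = fun x => (x ^ 3 - 5 * x) * (1 + x ^ 2) ^ (-(5 / 2) : ℝ) from
    funext fun x => (theta1_aux_d1 x).deriv]
  refine h.congr_deriv ?_
  rw [theta1_aux_succ (-(5 / 2)) r, show (-(5 / 2) - 1 : ℝ) = -(7 / 2) by norm_num]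
  ring

/-- `θ₁(r) = (1−r²)/(1+r²)^{3/2}` satisfies
`θ₁'' + (2/r)θ₁' + (15/(1+r²)²)θ₁ = 0` on `(0,1]`, with `θ₁(1) = 0`, `θ₁'(0) = 0`,
and `θ₁ > 0` on `[0,1)`: it is a zero-eigenvalue (principal) eigenfunction of the
linearization of the radial Lichnerowicz–York equation at the critical solution. -/
theorem theta1_principal_eigenfunction :
    (∀ r ∈ Set.Ioc (0 : ℝ) 1,
      deriv (deriv theta1) r + (2 / r) * deriv theta1 r
        + (15 / (1 + r ^ 2) ^ 2) * theta1 r = 0) ∧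
    theta1 1 = 0 ∧
    HasDerivAt theta1 0 0 ∧
    (∀ r ∈ Set.Ico (0 : ℝ) 1, 0 < theta1 r) := by
  refine ⟨?_, by simp [theta1], by simpa using theta1_aux_d1 0, ?_⟩
  · rintro r ⟨h0, -⟩
    rw [(theta1_aux_d2 r).deriv, (theta1_aux_d1 r).deriv, theta1_aux_eq,
      theta1_aux_succ (-(3 / 2)) r, show (-(3 / 2) - 1 : ℝ) = -(5 / 2) by norm_num,
      theta1_aux_succ (-(5 / 2)) r, show (-(5 / 2) - 1 : ℝ) = -(7 / 2) by norm_num]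
    generalize (1 + r ^ 2) ^ (-(7 / 2) : ℝ) = t
    have h : (1 + r ^ 2 : ℝ) ≠ 0 := by positivity
    field_simp
    ring
  · rintro r ⟨h0, h1⟩
    have : 0 < 1 - r ^ 2 := by nlinarith
    unfold theta1
    positivity
end

section
/- Let q : [0,1] → ℝ be continuous and let μ₁ ≠ μ_k be real numbers. Suppose θ₁ and θ_k are continuously differentiable on [0,1], twice differentiable on (0,1], satisfy θ'' + (2/r)θ' + q(r)θ = −μθ on (0,1] with μ = μ₁ and μ = μ_k respectively, satisfy θ(1) = 0 and θ'(0) = 0, and suppose θ₁(r) > 0 for all r ∈ [0,1) while θ_k is not identically zero. Then θ_k has a node, i.e., there exists r₀ ∈ (0,1) with θ_k(r₀) = 0. -/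
/-- If `θ₁` is a positive (principal) eigenfunction and `θ_k` a not identically zero
eigenfunction of the radial Schrödinger operator `θ ↦ −(θ'' + (2/r)θ' + qθ)` with
boundary conditions `θ(1) = 0`, `θ'(0) = 0`, for distinct eigenvalues `μ₁ ≠ μ_k`,
then `θ_k` has a node: it vanishes at some interior point `r₀ ∈ (0,1)`. -/
theorem higher_eigenfunction_has_node (q θ1 θk : ℝ → ℝ) (μ1 μk : ℝ)
    (hq : ContinuousOn q (Set.Icc 0 1))
    (hμ : μ1 ≠ μk)
    (h11 : DifferentiableOn ℝ θ1 (Set.Icc 0 1))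
    (h11' : ContinuousOn (deriv θ1) (Set.Icc 0 1))
    (h12 : DifferentiableOn ℝ (deriv θ1) (Set.Ioc 0 1))
    (h1ode : ∀ r ∈ Set.Ioc (0 : ℝ) 1,
      deriv (deriv θ1) r + (2 / r) * deriv θ1 r + q r * θ1 r = -μ1 * θ1 r)
    (h1bc1 : θ1 1 = 0) (h1bc0 : deriv θ1 0 = 0)
    (h1pos : ∀ r ∈ Set.Ico (0 : ℝ) 1, 0 < θ1 r)
    (hk1 : DifferentiableOn ℝ θk (Set.Icc 0 1))
    (hk1' : ContinuousOn (deriv θk) (Set.Icc 0 1))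
    (hk2 : DifferentiableOn ℝ (deriv θk) (Set.Ioc 0 1))
    (hkode : ∀ r ∈ Set.Ioc (0 : ℝ) 1,
      deriv (deriv θk) r + (2 / r) * deriv θk r + q r * θk r = -μk * θk r)
    (hkbc1 : θk 1 = 0) (hkbc0 : deriv θk 0 = 0)
    (hkne : ∃ r ∈ Set.Icc (0 : ℝ) 1, θk r ≠ 0) :
    ∃ r₀ ∈ Set.Ioo (0 : ℝ) 1, θk r₀ = 0 := by
  have hd : ∀ x ∈ Set.Ioo (0 : ℝ) 1,
      HasDerivAt (fun r => r ^ 2 * (deriv θ1 r * θk r - deriv θk r * θ1 r))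
        (2 * x * (deriv θ1 x * θk x - deriv θk x * θ1 x)
          + x ^ 2 * ((deriv (deriv θ1) x * θk x + deriv θ1 x * deriv θk x)
            - (deriv (deriv θk) x * θ1 x + deriv θk x * deriv θ1 x))) x := by
    intro x hx
    have n1 : Set.Icc (0 : ℝ) 1 ∈ nhds x := Icc_mem_nhds hx.1 hx.2
    have n2 : Set.Ioc (0 : ℝ) 1 ∈ nhds x := Ioc_mem_nhds hx.1 hx.2
    have a1 := (h11.differentiableAt n1).hasDerivAt
    have a2 := (h12.differentiableAt n2).hasDerivAt
    have b1 := (hk1.differentiableAt n1).hasDerivAt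
    have b2 := (hk2.differentiableAt n2).hasDerivAt
    have p : HasDerivAt (fun r : ℝ => r ^ 2) (2 * x) x := by
      simpa using hasDerivAt_pow 2 x
    exact p.mul ((a2.mul b1).sub (b2.mul a1))
  have hc : ContinuousOn (fun r => r ^ 2 * (deriv θ1 r * θk r - deriv θk r * θ1 r))
      (Set.Icc 0 1) :=
    (continuousOn_id.pow 2).mul
      ((h11'.mul hk1.continuousOn).sub (hk1'.mul h11.continuousOn))
  obtain ⟨c, hcm, h0⟩ := exists_hasDerivAt_eq_zero (zero_lt_one' ℝ) hc
    (by simp [h1bc1, hkbc1]) hd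
  refine ⟨c, hcm, ?_⟩
  have hc0 : c ≠ 0 := hcm.1.ne'
  have e1 := h1ode c ⟨hcm.1, hcm.2.le⟩
  have ek := hkode c ⟨hcm.1, hcm.2.le⟩
  have e1' : deriv (deriv θ1) c
      = -μ1 * θ1 c - q c * θ1 c - (2 / c) * deriv θ1 c := by linarith
  have ek' : deriv (deriv θk) c
      = -μk * θk c - q c * θk c - (2 / c) * deriv θk c := by linarith
  rw [e1', ek'] at h0
  have h2 : c ^ 2 * (μk - μ1) * θ1 c * θk c = 0 := by
    rw [← h0]; field_simp; ring
  have hne : c ^ 2 * (μk - μ1) * θ1 c ≠ 0 :=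
    mul_ne_zero (mul_ne_zero (pow_ne_zero 2 hc0) (sub_ne_zero.2 hμ.symm))
      (h1pos c ⟨hcm.1.le, hcm.2⟩).ne'
  exact (mul_eq_zero.1 h2).resolve_left hne
end

section
/- Every function f : [0,1] → ℝ that is continuously differentiable on [0,1], twice differentiable on (0,1], and satisfies f''(r) + (2/r)·f'(r) + (15/(1+r²)²)·f(r) = 0 on (0,1] with f(1) = 0 and f'(0) = 0, is a scalar multiple of θ₁(r) = (1−r²)/(1+r²)^{3/2}. Hence the kernel of the linearization of the radial Lichnerowicz–York equation at the critical solution (α = 1, ρ_c = 3/(8π)) is one-dimensional. -/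
theorem aux_const (g : ℝ → ℝ) (b : ℝ) (hb : 0 < b) (hc : ContinuousOn g (Set.Icc 0 b))
    (hd : ∀ x ∈ Set.Ioo 0 b, HasDerivAt g 0 x) : g b = g 0 := by
  obtain ⟨c, hc1, h⟩ := exists_hasDerivAt_eq_slope g (fun _ => 0) hb hc hd
  have : b - 0 ≠ 0 := by linarith
  field_simp at h
  linarith

theorem aux_v (r : ℝ) : HasDerivAt (fun r : ℝ => (1 + r ^ 2) ^ ((3 : ℝ) / 2))
    (3 * r * (1 + r ^ 2) ^ ((3 : ℝ) / 2) / (1 + r ^ 2)) r := by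
  have hp : 0 < 1 + r ^ 2 := by positivity
  have h1 : HasDerivAt (fun r : ℝ => 1 + r ^ 2) (2 * r) r := by
    simpa using (hasDerivAt_pow 2 r).const_add 1
  have h := h1.rpow_const (p := (3 : ℝ) / 2) (Or.inl hp.ne')
  rw [Real.rpow_sub_one hp.ne'] at h
  convert h using 1
  ring

/-- Every solution `f` of the linearized equation
`f'' + (2/r)f' + (15/(1+r²)²)f = 0` on `(0,1]` with `f(1) = 0` and `f'(0) = 0`
is a scalar multiple of `θ₁(r) = (1−r²)/(1+r²)^{3/2}`: the kernel of the
linearization at the critical solution is one-dimensional. -/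
theorem kernel_one_dimensional (f : ℝ → ℝ)
    (hf1 : DifferentiableOn ℝ f (Set.Icc 0 1))
    (hf1' : ContinuousOn (deriv f) (Set.Icc 0 1))
    (hf2 : DifferentiableOn ℝ (deriv f) (Set.Ioc 0 1))
    (hode : ∀ r ∈ Set.Ioc (0 : ℝ) 1,
      deriv (deriv f) r + (2 / r) * deriv f r + (15 / (1 + r ^ 2) ^ 2) * f r = 0)
    (hbc1 : f 1 = 0) (hbc0 : deriv f 0 = 0) :
    ∃ c : ℝ, ∀ r ∈ Set.Icc (0 : ℝ) 1, f r = c * theta1 r := by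
  have hfd : ∀ x ∈ Set.Ioo (0:ℝ) 1, HasDerivAt f (deriv f x) x := fun x hx =>
    ((hf1 x ⟨hx.1.le, hx.2.le⟩).differentiableAt (Icc_mem_nhds hx.1 hx.2)).hasDerivAt
  have hfdd : ∀ x ∈ Set.Ioo (0:ℝ) 1, HasDerivAt (deriv f)
      (-((2 / x) * deriv f x) - (15 / (1 + x ^ 2) ^ 2) * f x) x := by
    intro x hx
    have h := ((hf2 x ⟨hx.1, hx.2.le⟩).differentiableAt (Ioc_mem_nhds hx.1 hx.2)).hasDerivAt
    have e := hode x ⟨hx.1, hx.2.le⟩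
    exact h.congr_deriv (by linarith)
  have hfc := hf1.continuousOn
  obtain ⟨v, hv⟩ : ∃ v : ℝ → ℝ, v = fun r : ℝ => (1 + r ^ 2) ^ ((3 : ℝ) / 2) := ⟨_, rfl⟩
  have hvp : ∀ r, 0 < v r := fun r => by rw [hv]; positivity
  have hvd : ∀ r, HasDerivAt v (3 * r * v r / (1 + r ^ 2)) r := fun r => by
    rw [hv]; exact aux_v r
  have hvc : Continuous v := continuous_iff_continuousAt.2 fun r => (hvd r).continuousAt
  have hq : ∀ r : ℝ, 1 + r ^ 2 ≠ 0 := fun r => by positivity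
  have hW : ∀ x ∈ Set.Ioo (0:ℝ) 1, deriv f x * (1 - x ^ 4) + f x * (5 * x - x ^ 3) = 0 := by
    intro b hb
    have key := aux_const (fun x => x ^ 2 * (deriv f x * (1 - x ^ 4) + f x * (5 * x - x ^ 3)) /
      (v x * (1 + x ^ 2))) b hb.1 ?_ ?_
    · have h1 := hvp b
      have h2 := hq b
      have h3 := hb.1.ne'
      have h4 := h1.ne'
      simpa [h2, h3, h4] using key
    · have hs : Set.Icc 0 b ⊆ Set.Icc (0:ℝ) 1 := Set.Icc_subset_Icc_right hb.2.le
      have a1 := hfc.mono hs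
      have a2 := hf1'.mono hs
      have a3 := hvc.continuousOn (s := Set.Icc 0 b)
      refine ContinuousOn.div (by fun_prop) (by fun_prop) ?_
      intro x _
      exact mul_ne_zero (hvp x).ne' (hq x)
    · intro x hx
      have hx' : x ∈ Set.Ioo (0:ℝ) 1 := ⟨hx.1, hx.2.trans hb.2⟩
      have b4 : HasDerivAt (fun x : ℝ => 1 - x ^ 4) (-(4 * x ^ 3)) x := by
        simpa using (hasDerivAt_pow 4 x).const_sub 1
      have b3 : HasDerivAt (fun x : ℝ => 5 * x - x ^ 3) (5 - 3 * x ^ 2) x := by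
        refine (((hasDerivAt_id x).const_mul 5).sub (hasDerivAt_pow 3 x)).congr_deriv ?_
        norm_num
      have b2 : HasDerivAt (fun x : ℝ => x ^ 2) (2 * x) x := by
        simpa using hasDerivAt_pow 2 x
      have h := (b2.mul (((hfdd x hx').mul b4).add ((hfd x hx').mul b3))).div
        ((hvd x).mul (b2.const_add 1)) (mul_ne_zero (hvp x).ne' (hq x))
      refine h.congr_deriv ?_
      have c1 := (hvp x).ne'
      have c2 := hq x
      have c3 := hx.1.ne'
      simp only [Pi.mul_apply, Pi.add_apply]
      field_simp
      ring
  refine ⟨f 0, ?_⟩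
  intro r hr
  have hth : theta1 r = (1 - r ^ 2) / v r := by rw [hv]; rfl
  rw [hth]
  rcases hr.1.eq_or_lt with h0 | h0
  · subst h0
    simp [hv]
  rcases hr.2.eq_or_lt with h1 | h1
  · subst h1
    simp [hbc1]
  have hn : ∀ x ∈ Set.Icc 0 r, 1 - x ^ 2 ≠ 0 := by
    intro x hx
    have := hx.1
    have := hx.2
    nlinarith
  have key := aux_const (fun x => f x * v x / (1 - x ^ 2)) r h0 ?_ ?_
  · have c1 := (hvp r).ne'
    have c2 := hn r ⟨h0.le, le_rfl⟩
    have c3 : v 0 = 1 := by simp [hv]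
    simp only [c3] at key
    field_simp at key ⊢
    linarith
  · have a1 := hfc.mono (Set.Icc_subset_Icc_right h1.le)
    have a3 := hvc.continuousOn (s := Set.Icc 0 r)
    exact ContinuousOn.div (by fun_prop) (by fun_prop) hn
  · intro x hx
    have hx' : x ∈ Set.Ioo (0:ℝ) 1 := ⟨hx.1, hx.2.trans h1⟩
    have b2 : HasDerivAt (fun x : ℝ => 1 - x ^ 2) (-(2 * x)) x := by
      simpa using (hasDerivAt_pow 2 x).const_sub 1
    have c2 := hn x ⟨hx.1.le, hx.2.le⟩
    have h := ((hfd x hx').mul (hvd x)).div b2 c2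
    refine h.congr_deriv ?_
    have c1 := hq x
    have w := hW x hx'
    simp only [Pi.mul_apply]
    field_simp
    linear_combination v x * w
end

section
/- Let a, b : [0,1] → ℝ be continuous with a(r) ≥ b(r) for all r ∈ [0,1] and a(r₀) > b(r₀) for some r₀ ∈ [0,1). Suppose θ_a and θ_b are continuously differentiable on [0,1], twice differentiable on (0,1], positive on [0,1), satisfy θ_a'' + (2/r)θ_a' + a(r)θ_a = −μ_a θ_a and θ_b'' + (2/r)θ_b' + b(r)θ_b = −μ_b θ_b on (0,1], and satisfy θ(1) = 0 and θ'(0) = 0. Then μ_a < μ_b. -/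
/-- Monotonicity of the principal eigenvalue in the potential: if `a ≥ b` on `[0,1]`
with strict inequality somewhere in `[0,1)`, and `θ_a`, `θ_b` are principal (positive)
eigenfunctions of the radial Schrödinger operators with potentials `a` and `b` and
eigenvalues `μ_a` and `μ_b` respectively, then `μ_a < μ_b`. -/
theorem principal_eigenvalue_comparison (a b θa θb : ℝ → ℝ) (μa μb : ℝ)
    (ha : ContinuousOn a (Set.Icc 0 1))
    (hb : ContinuousOn b (Set.Icc 0 1))
    (hab : ∀ r ∈ Set.Icc (0 : ℝ) 1, b r ≤ a r)
    (hab' : ∃ r₀ ∈ Set.Ico (0 : ℝ) 1, b r₀ < a r₀)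
    (ha1 : DifferentiableOn ℝ θa (Set.Icc 0 1))
    (ha1' : ContinuousOn (deriv θa) (Set.Icc 0 1))
    (ha2 : DifferentiableOn ℝ (deriv θa) (Set.Ioc 0 1))
    (hapos : ∀ r ∈ Set.Ico (0 : ℝ) 1, 0 < θa r)
    (haode : ∀ r ∈ Set.Ioc (0 : ℝ) 1,
      deriv (deriv θa) r + (2 / r) * deriv θa r + a r * θa r = -μa * θa r)
    (habc1 : θa 1 = 0) (habc0 : deriv θa 0 = 0)
    (hb1 : DifferentiableOn ℝ θb (Set.Icc 0 1))
    (hb1' : ContinuousOn (deriv θb) (Set.Icc 0 1))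
    (hb2 : DifferentiableOn ℝ (deriv θb) (Set.Ioc 0 1))
    (hbpos : ∀ r ∈ Set.Ico (0 : ℝ) 1, 0 < θb r)
    (hbode : ∀ r ∈ Set.Ioc (0 : ℝ) 1,
      deriv (deriv θb) r + (2 / r) * deriv θb r + b r * θb r = -μb * θb r)
    (hbbc1 : θb 1 = 0) (hbbc0 : deriv θb 0 = 0) :
    μa < μb := by
  by_contra hcon
  push Not at hcon
  set W : ℝ → ℝ := fun r => r ^ 2 * (deriv θa r * θb r - θa r * deriv θb r) with hW
  have hWc : ContinuousOn W (Set.Icc 0 1) :=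
    (continuousOn_id.pow 2).mul
      ((ha1'.mul hb1.continuousOn).sub (ha1.continuousOn.mul hb1'))
  have hWd : ∀ r ∈ Set.Ioo (0 : ℝ) 1,
      HasDerivAt W (r ^ 2 * (θa r * θb r) * (b r - a r + (μb - μa))) r := by
    intro r hr
    have hr0 : r ≠ 0 := hr.1.ne'
    have hn : Set.Icc (0 : ℝ) 1 ∈ nhds r := Icc_mem_nhds hr.1 hr.2
    have hn' : Set.Ioc (0 : ℝ) 1 ∈ nhds r := Ioc_mem_nhds hr.1 hr.2
    have h1 := (ha1.differentiableAt hn).hasDerivAt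
    have h2 := (hb1.differentiableAt hn).hasDerivAt
    have h3 := (ha2.differentiableAt hn').hasDerivAt
    have h4 := (hb2.differentiableAt hn').hasDerivAt
    have e1 := haode r ⟨hr.1, hr.2.le⟩
    have e2 := hbode r ⟨hr.1, hr.2.le⟩
    have h := (hasDerivAt_pow 2 r).mul ((h3.mul h2).sub (h1.mul h4))
    refine h.congr_deriv ?_
    have e1' : deriv (deriv θa) r = -μa * θa r - a r * θa r - (2 / r) * deriv θa r := by
      linarith
    have e2' : deriv (deriv θb) r = -μb * θb r - b r * θb r - (2 / r) * deriv θb r := by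
      linarith
    simp only [Pi.mul_apply, Pi.sub_apply, e1', e2']
    field_simp
    push_cast
    ring
  have hanti : AntitoneOn W (Set.Icc 0 1) := by
    apply antitoneOn_of_deriv_nonpos (convex_Icc 0 1) hWc
    · intro r hr
      rw [interior_Icc] at hr
      exact (hWd r hr).differentiableAt.differentiableWithinAt
    · intro r hr
      rw [interior_Icc] at hr
      rw [(hWd r hr).deriv]
      have p1 := hapos r ⟨hr.1.le, hr.2⟩
      have p2 := hbpos r ⟨hr.1.le, hr.2⟩
      have := hab r ⟨hr.1.le, hr.2.le⟩
      exact mul_nonpos_of_nonneg_of_nonpos (by positivity) (by linarith)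
  have hW0 : W 0 = 0 := by simp [hW]
  have hW1 : W 1 = 0 := by simp [hW, habc1, hbbc1]
  have hz : ∀ r ∈ Set.Icc (0 : ℝ) 1, W r = 0 := by
    intro r hr
    have l := hanti (Set.left_mem_Icc.2 zero_le_one) hr hr.1
    have u := hanti hr (Set.right_mem_Icc.2 zero_le_one) hr.2
    linarith
  have heq : Set.EqOn a b (Set.Ioo 0 1) := by
    intro r hr
    have hev : W =ᶠ[nhds r] fun _ => 0 := by
      filter_upwards [Icc_mem_nhds hr.1 hr.2] with x hx using hz x hx
    have hd : HasDerivAt W 0 r := (hasDerivAt_const r (0 : ℝ)).congr_of_eventuallyEq hev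
    have h0 := (hWd r hr).unique hd
    have p0 := hr.1
    have p1 := hapos r ⟨hr.1.le, hr.2⟩
    have p2 := hbpos r ⟨hr.1.le, hr.2⟩
    have hp : r ^ 2 * (θa r * θb r) ≠ 0 := by positivity
    have := (mul_eq_zero.1 h0).resolve_left hp
    have := hab r ⟨hr.1.le, hr.2.le⟩
    linarith
  have heq' : Set.EqOn a b (Set.Icc 0 1) :=
    heq.of_subset_closure ha hb Set.Ioo_subset_Icc_self
      (by rw [closure_Ioo zero_ne_one])
  obtain ⟨r₀, hr₀, hlt⟩ := hab'
  exact hlt.ne' (heq' ⟨hr₀.1, hr₀.2.le⟩)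
end

section
/- Let a : [0,1] → ℝ be continuous, μ ∈ ℝ, and suppose θ : [0,1] → ℝ is continuously differentiable on [0,1], twice differentiable on (0,1], positive on [0,1), and satisfies θ'' + (2/r)θ' + a(r)θ = −μθ on (0,1] with θ(1) = 0 and θ'(0) = 0. Then for every continuously differentiable η : [0,1] → ℝ with η(1) = 0, one has ∫₀¹ (η'(r)² − a(r)·η(r)²)·r² dr ≥ μ·∫₀¹ η(r)²·r² dr. -/
/-- Rayleigh-quotient lower bound by the principal eigenvalue: if `θ` is a positive
(principal) eigenfunction with eigenvalue `μ` of the radial Schrödinger operator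
`θ ↦ −(θ'' + (2/r)θ' + aθ)` with `θ(1) = 0`, `θ'(0) = 0`, then every continuously
differentiable `η` with `η(1) = 0` satisfies
`∫₀¹ (η'² − a η²) r² dr ≥ μ ∫₀¹ η² r² dr`. -/
theorem rayleigh_quotient_lower_bound (a θ : ℝ → ℝ) (μ : ℝ)
    (ha : ContinuousOn a (Set.Icc 0 1))
    (hθ1 : DifferentiableOn ℝ θ (Set.Icc 0 1))
    (hθ1' : ContinuousOn (deriv θ) (Set.Icc 0 1))
    (hθ2 : DifferentiableOn ℝ (deriv θ) (Set.Ioc 0 1))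
    (hθpos : ∀ r ∈ Set.Ico (0 : ℝ) 1, 0 < θ r)
    (hθode : ∀ r ∈ Set.Ioc (0 : ℝ) 1,
      deriv (deriv θ) r + (2 / r) * deriv θ r + a r * θ r = -μ * θ r)
    (hθbc1 : θ 1 = 0) (hθbc0 : deriv θ 0 = 0)
    (η η' : ℝ → ℝ)
    (hη : ∀ r ∈ Set.Icc (0 : ℝ) 1, HasDerivAt η (η' r) r)
    (hη' : ContinuousOn η' (Set.Icc 0 1))
    (hηbc : η 1 = 0) :
    μ * ∫ r in (0 : ℝ)..1, η r ^ 2 * r ^ 2 ≤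
      ∫ r in (0 : ℝ)..1, (η' r ^ 2 - a r * η r ^ 2) * r ^ 2 := by
  have hηc : ContinuousOn η (Set.Icc 0 1) := fun r hr => (hη r hr).continuousAt.continuousWithinAt
  have hθc : ContinuousOn θ (Set.Icc 0 1) := hθ1.continuousOn
  -- Jacobi identity on `[0, s]` with `η - η s`
  have key : ∀ s ∈ Set.Ioo (0 : ℝ) 1,
      0 ≤ ∫ r in (0 : ℝ)..s, (η' r ^ 2 - (a r + μ) * (η r - η s) ^ 2) * r ^ 2 := by
    intro s hs
    have hsub : Set.Icc 0 s ⊆ Set.Icc (0 : ℝ) 1 := Set.Icc_subset_Icc_right hs.2.le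
    have hne : ∀ r ∈ Set.Icc 0 s, θ r ≠ 0 := fun r hr => (hθpos r ⟨hr.1, hr.2.trans_lt hs.2⟩).ne'
    have h := intervalIntegral.sub_le_integral_of_hasDeriv_right_of_le
      (g := fun r => r ^ 2 * (η r - η s) ^ 2 * deriv θ r / θ r)
      (g' := fun r => (η' r ^ 2 - (a r + μ) * (η r - η s) ^ 2) * r ^ 2
        - r ^ 2 * (η' r - (η r - η s) * deriv θ r / θ r) ^ 2)
      (φ := fun r => (η' r ^ 2 - (a r + μ) * (η r - η s) ^ 2) * r ^ 2)
      hs.1.le ?_ ?_ ?_ ?_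
    · simpa using h
    · refine ContinuousOn.div ?_ (hθc.mono hsub) hne
      refine ContinuousOn.mul ?_ (hθ1'.mono hsub)
      have := hηc.mono hsub
      fun_prop
    · intro r hr
      have hr1 : r < 1 := hr.2.trans hs.2
      have hr0 : r ≠ 0 := hr.1.ne'
      have hn := hne r ⟨hr.1.le, hr.2.le⟩
      have d1 : HasDerivAt θ (deriv θ r) r :=
        (hθ1.differentiableAt (Icc_mem_nhds hr.1 hr1)).hasDerivAt
      have d2 : HasDerivAt (deriv θ) (deriv (deriv θ) r) r :=
        (hθ2.differentiableAt (Ioc_mem_nhds hr.1 hr1)).hasDerivAt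
      have d3 := (hη r ⟨hr.1.le, hr1.le⟩).sub_const (η s)
      have ho := hθode r ⟨hr.1, hr1.le⟩
      have ho' : deriv (deriv θ) r = -μ * θ r - a r * θ r - (2 / r) * deriv θ r := by linarith
      have D := (((((hasDerivAt_id r).pow 2).mul (d3.pow 2)).mul d2).div d1 hn)
      refine HasDerivAt.hasDerivWithinAt ?_
      refine D.congr_deriv ?_
      rw [ho']
      simp
      field_simp
      ring
    · apply ContinuousOn.integrableOn_Icc
      have := hηc.mono hsub
      have := hη'.mono hsub
      have := ha.mono hsub
      fun_prop
    · intro r hr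
      have : 0 ≤ r ^ 2 * (η' r - (η r - η s) * deriv θ r / θ r) ^ 2 := by positivity
      linarith
  have c1 : ContinuousOn (fun r => (η' r ^ 2 - (a r + μ) * η r ^ 2) * r ^ 2) (Set.Icc 0 1) := by
    fun_prop
  have c2 : ContinuousOn (fun r => (a r + μ) * η r * r ^ 2) (Set.Icc 0 1) := by fun_prop
  have c3 : ContinuousOn (fun r => (a r + μ) * r ^ 2) (Set.Icc 0 1) := by fun_prop
  have P : ∀ f : ℝ → ℝ, ContinuousOn f (Set.Icc 0 1) →
      ContinuousOn (fun s => ∫ r in (0 : ℝ)..s, f r) (Set.Icc 0 1) := by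
    intro f hf
    have := intervalIntegral.continuousOn_primitive_interval (a := (0 : ℝ)) (b := 1) (f := f)
      (μ := MeasureTheory.volume)
      (by rw [Set.uIcc_of_le zero_le_one]; exact hf.integrableOn_Icc)
    rwa [Set.uIcc_of_le zero_le_one] at this
  have II : ∀ f : ℝ → ℝ, ContinuousOn f (Set.Icc 0 1) → ∀ s ∈ Set.Icc (0 : ℝ) 1,
      IntervalIntegrable f MeasureTheory.volume 0 s := by
    intro f hf s hs
    apply ContinuousOn.intervalIntegrable
    rw [Set.uIcc_of_le hs.1]
    exact hf.mono (Set.Icc_subset_Icc_right hs.2)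
  let K : ℝ → ℝ := fun s => (∫ r in (0 : ℝ)..s, (η' r ^ 2 - (a r + μ) * η r ^ 2) * r ^ 2)
    + 2 * η s * (∫ r in (0 : ℝ)..s, (a r + μ) * η r * r ^ 2)
    - η s ^ 2 * (∫ r in (0 : ℝ)..s, (a r + μ) * r ^ 2)
  have hK : ContinuousOn K (Set.Icc 0 1) := by
    have := P _ c1
    have := P _ c2
    have := P _ c3
    exact ((P _ c1).add ((continuousOn_const.mul hηc).mul (P _ c2))).sub ((hηc.pow 2).mul (P _ c3))
  have hKpos : ∀ s ∈ Set.Ioo (0 : ℝ) 1, 0 ≤ K s := by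
    intro s hs
    have hs' := Set.Ioo_subset_Icc_self hs
    have e : K s = ∫ r in (0 : ℝ)..s, (η' r ^ 2 - (a r + μ) * (η r - η s) ^ 2) * r ^ 2 := by
      simp only [K]
      rw [← intervalIntegral.integral_const_mul, ← intervalIntegral.integral_const_mul,
        ← intervalIntegral.integral_add (II _ c1 s hs') ((II _ c2 s hs').const_mul _),
        ← intervalIntegral.integral_sub ((II _ c1 s hs').add ((II _ c2 s hs').const_mul _))
          ((II _ c3 s hs').const_mul _)]
      congr 1
      ext r
      ring
    rw [e]
    exact key s hs
  have h1 : (1 : ℝ) ∈ Set.Icc (0 : ℝ) 1 := by simp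
  have hK1 : 0 ≤ K 1 := by
    have ht : Filter.Tendsto K (nhdsWithin 1 (Set.Ioo 0 1)) (nhds (K 1)) :=
      (hK 1 h1).mono_left (nhdsWithin_mono _ Set.Ioo_subset_Icc_self)
    have : (nhdsWithin (1 : ℝ) (Set.Ioo 0 1)).NeBot := right_nhdsWithin_Ioo_neBot zero_lt_one
    exact ge_of_tendsto ht (Filter.eventually_of_mem self_mem_nhdsWithin hKpos)
  have c4 : ContinuousOn (fun r => η r ^ 2 * r ^ 2) (Set.Icc 0 1) := by fun_prop
  have c5 : ContinuousOn (fun r => (η' r ^ 2 - a r * η r ^ 2) * r ^ 2) (Set.Icc 0 1) := by fun_prop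
  have e1 : K 1 = (∫ r in (0 : ℝ)..1, (η' r ^ 2 - a r * η r ^ 2) * r ^ 2)
      - μ * ∫ r in (0 : ℝ)..1, η r ^ 2 * r ^ 2 := by
    rw [← intervalIntegral.integral_const_mul,
      ← intervalIntegral.integral_sub (II _ c5 1 h1) ((II _ c4 1 h1).const_mul _)]
    simp only [K, hηbc]
    simp only [mul_zero, zero_mul, add_zero, ne_eq, OfNat.ofNat_ne_zero, not_false_eq_true,
      zero_pow, sub_zero]
    congr 1
    ext r
    ring
  linarith
end

section
/- For every continuously differentiable function η : [0,1] → ℝ with η(1) = 0, one has ∫₀¹ (η'(r)² − (15/(1+r²)²)·η(r)²)·r² dr ≥ 0. I.e., the principal eigenvalue of the linearization of the radial Lichnerowicz–York equation at the critical solution α = 1 is zero. -/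
/-- The Rayleigh quotient of the linearization of the radial Lichnerowicz–York
equation at the critical solution `α = 1` (potential `15/(1+r²)²`) is nonnegative:
for every continuously differentiable `η` with `η(1) = 0`,
`∫₀¹ (η'² − (15/(1+r²)²) η²) r² dr ≥ 0`.  I.e. the principal eigenvalue of the
linearization at the critical solution is zero. -/
theorem critical_rayleigh_nonneg (η η' : ℝ → ℝ)
    (hη : ∀ r ∈ Set.Icc (0 : ℝ) 1, HasDerivAt η (η' r) r)
    (hη' : ContinuousOn η' (Set.Icc 0 1))
    (hηbc : η 1 = 0) :
    0 ≤ ∫ r in (0 : ℝ)..1, (η' r ^ 2 - (15 / (1 + r ^ 2) ^ 2) * η r ^ 2) * r ^ 2 := by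
  have hc : ContinuousOn η (Set.Icc 0 1) := fun r hr => (hη r hr).continuousAt.continuousWithinAt
  have h1 : DifferentiableAt ℝ η 1 := (hη 1 (by norm_num)).differentiableAt
  set F : ℝ → ℝ := fun r => -(2 * r ^ 3 / (1 - r ^ 2) + 3 * r ^ 3 / (1 + r ^ 2)) * η r ^ 2 with hF
  have hD : ContinuousOn (dslope η 1) (Set.Icc 0 1) := by
    intro r hr
    by_cases h : r = 1
    · subst h
      exact (continuousAt_dslope_same.2 h1).continuousWithinAt
    · exact ((continuousAt_dslope_of_ne h).2 (hη r hr).continuousAt).continuousWithinAt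
  have hFc : ContinuousOn F (Set.Icc 0 1) := by
    have hG : ContinuousOn (fun r => 2 * r ^ 3 / (1 + r) * dslope η 1 r * η r
        - 3 * r ^ 3 / (1 + r ^ 2) * η r ^ 2) (Set.Icc 0 1) := by
      refine ContinuousOn.sub (ContinuousOn.mul (ContinuousOn.mul ?_ hD) hc)
        (ContinuousOn.mul ?_ (hc.pow 2))
      · refine ContinuousOn.div (by fun_prop) (by fun_prop) ?_
        intro x hx
        have := hx.1
        positivity
      · refine ContinuousOn.div (by fun_prop) (by fun_prop) ?_
        intro x hx
        positivity
    refine hG.congr ?_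
    intro r hr
    by_cases h : r = 1
    · subst h
      simp [hF, hηbc]
    · have e1 : r - 1 ≠ 0 := sub_ne_zero.2 h
      have e2 : 1 + r ≠ 0 := by linarith [hr.1]
      have e3 : 1 - r ^ 2 ≠ 0 := by
        have : 1 - r ^ 2 = -((r - 1) * (1 + r)) := by ring
        rw [this]
        exact neg_ne_zero.2 (mul_ne_zero e1 e2)
      have e4 : 1 + r ^ 2 ≠ 0 := by positivity
      simp only [hF]
      rw [dslope_of_ne _ h, slope_def_field, hηbc]
      field_simp
      ring
  have hgc : ContinuousOn
      (fun r => (η' r ^ 2 - (15 / (1 + r ^ 2) ^ 2) * η r ^ 2) * r ^ 2) (Set.Icc 0 1) := by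
    refine ContinuousOn.mul (ContinuousOn.sub (hη'.pow 2) (ContinuousOn.mul ?_ (hc.pow 2)))
      (by fun_prop)
    refine ContinuousOn.div (by fun_prop) (by fun_prop) ?_
    intro x hx
    positivity
  have key := intervalIntegral.sub_le_integral_of_hasDeriv_right_of_le (a := 0) (b := 1)
    (g := F) (g' := fun r => (η' r ^ 2 - (15 / (1 + r ^ 2) ^ 2) * η r ^ 2) * r ^ 2
      - r ^ 2 * (η' r + (2 * r / (1 - r ^ 2) + 3 * r / (1 + r ^ 2)) * η r) ^ 2)
    (φ := fun r => (η' r ^ 2 - (15 / (1 + r ^ 2) ^ 2) * η r ^ 2) * r ^ 2)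
    zero_le_one hFc ?_ (hgc.integrableOn_Icc) ?_
  · simpa [hF, hηbc] using key
  · intro r hr
    have e3 : 1 - r ^ 2 ≠ 0 := by nlinarith [hr.1, hr.2]
    have e4 : 1 + r ^ 2 ≠ 0 := by positivity
    have d3 (c : ℝ) : HasDerivAt (fun r : ℝ => c * r ^ 3) (c * (3 * r ^ 2)) r := by
      simpa using (hasDerivAt_pow 3 r).const_mul c
    have d2 : HasDerivAt (fun r : ℝ => r ^ 2) (2 * r) r := by
      simpa using hasDerivAt_pow 2 r
    have d := ((((d3 2).div (d2.const_sub 1) e3).add ((d3 3).div (d2.const_add 1) e4)).neg).mul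
      ((hη r ⟨hr.1.le, hr.2.le⟩).pow 2)
    refine HasDerivAt.hasDerivWithinAt ?_
    refine d.congr_deriv ?_
    simp only [Pi.add_apply, Pi.neg_apply, Pi.div_apply, Pi.pow_apply]
    field_simp
    ring
  · intro r hr
    have : 0 ≤ r ^ 2 * (η' r + (2 * r / (1 - r ^ 2) + 3 * r / (1 + r ^ 2)) * η r) ^ 2 := by
      positivity
    linarith
end

section
/- For every α > 1 and every continuously differentiable η : [0,1] → ℝ with η(1) = 0 and η not identically zero, one has ∫₀¹ (η'(r)² − 15·(α/(α²+r²))²·η(r)²)·r² dr > 0. That is, the lower branch of solutions of the radial Lichnerowicz–York equation is stable: the principal eigenvalue of its linearization is strictly positive. -/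
/-- Stability of the lower branch: for every `α > 1` (lower branch of solutions of
the radial Lichnerowicz–York equation, with linearized potential `15(α/(α²+r²))²`)
and every continuously differentiable `η` with `η(1) = 0` not identically zero,
the Rayleigh numerator `∫₀¹ (η'² − 15(α/(α²+r²))² η²) r² dr` is strictly positive,
i.e. the principal eigenvalue of the linearization is strictly positive. -/
theorem lower_branch_stable (α : ℝ) (hα : 1 < α) (η η' : ℝ → ℝ)
    (hη : ∀ r ∈ Set.Icc (0 : ℝ) 1, HasDerivAt η (η' r) r)
    (hη' : ContinuousOn η' (Set.Icc 0 1))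
    (hηbc : η 1 = 0)
    (hηne : ∃ r ∈ Set.Icc (0 : ℝ) 1, η r ≠ 0) :
    0 < ∫ r in (0 : ℝ)..1,
      (η' r ^ 2 - 15 * (α / (α ^ 2 + r ^ 2)) ^ 2 * η r ^ 2) * r ^ 2 := by
  have hp : ∀ r : ℝ, 0 < α ^ 2 + r ^ 2 := fun r => by positivity
  have hm : ∀ r ∈ Set.Icc (0 : ℝ) 1, 0 < α ^ 2 - r ^ 2 := fun r hr => by
    nlinarith [hr.1, hr.2]
  have hηc : ContinuousOn η (Set.Icc 0 1) := fun r hr =>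
    (hη r hr).continuousAt.continuousWithinAt
  obtain ⟨q, hq⟩ : ∃ q : ℝ → ℝ, q = fun r => -(2 * r) / (α ^ 2 - r ^ 2) - 3 * r / (α ^ 2 + r ^ 2) :=
    ⟨_, rfl⟩
  have hqc : ContinuousOn q (Set.Icc 0 1) := by
    rw [hq]
    refine ContinuousOn.sub (ContinuousOn.div (by fun_prop) (by fun_prop) ?_)
      (ContinuousOn.div (by fun_prop) (by fun_prop) ?_)
    · exact fun r hr => (hm r hr).ne'
    · exact fun r hr => (hp r).ne'
  have hd1 : ∀ r : ℝ, HasDerivAt (fun r : ℝ => α ^ 2 - r ^ 2) (-(2 * r)) r := fun r => by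
    simpa using (hasDerivAt_pow 2 r).const_sub (α ^ 2)
  have hd2 : ∀ r : ℝ, HasDerivAt (fun r : ℝ => α ^ 2 + r ^ 2) (2 * r) r := fun r => by
    simpa using (hasDerivAt_pow 2 r).const_add (α ^ 2)
  have hqd : ∀ r ∈ Set.Icc (0 : ℝ) 1, HasDerivAt q
      ((-2 * (α ^ 2 - r ^ 2) - (-(2 * r)) * (-(2 * r))) / (α ^ 2 - r ^ 2) ^ 2
        - (3 * (α ^ 2 + r ^ 2) - 3 * r * (2 * r)) / (α ^ 2 + r ^ 2) ^ 2) r := fun r hr => by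
    rw [hq]
    have e1 : HasDerivAt (fun r : ℝ => -(2 * r)) (-2) r := by
      exact (((hasDerivAt_id r).const_mul 2).neg).congr_deriv (by norm_num)
    have e2 : HasDerivAt (fun r : ℝ => 3 * r) 3 r := by
      simpa using ((hasDerivAt_id r).const_mul 3)
    exact (e1.div (hd1 r) (hm r hr).ne').sub (e2.div (hd2 r) (hp r).ne')
  have hVc : ContinuousOn (fun r => (η' r ^ 2 - 15 * (α / (α ^ 2 + r ^ 2)) ^ 2 * η r ^ 2) * r ^ 2)
      (Set.Icc 0 1) := by
    have : ContinuousOn (fun r : ℝ => α / (α ^ 2 + r ^ 2)) (Set.Icc 0 1) :=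
      ContinuousOn.div (by fun_prop) (by fun_prop) (fun r _ => (hp r).ne')
    fun_prop
  have hSc : ContinuousOn (fun r => (η' r - q r * η r) ^ 2 * r ^ 2) (Set.Icc 0 1) := by
    fun_prop
  have hu : Set.uIcc (0 : ℝ) 1 = Set.Icc 0 1 := Set.uIcc_of_le zero_le_one
  have hVi := ContinuousOn.intervalIntegrable (μ := MeasureTheory.volume) (hu ▸ hVc)
  have hSi := ContinuousOn.intervalIntegrable (μ := MeasureTheory.volume) (hu ▸ hSc)
  have hF : ∀ r ∈ Set.uIcc (0 : ℝ) 1, HasDerivAt (fun r => q r * r ^ 2 * η r ^ 2)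
      ((η' r ^ 2 - 15 * (α / (α ^ 2 + r ^ 2)) ^ 2 * η r ^ 2) * r ^ 2
        - (η' r - q r * η r) ^ 2 * r ^ 2) r := by
    intro r hr
    rw [hu] at hr
    have h := ((hqd r hr).mul (hasDerivAt_pow 2 r)).mul ((hη r hr).pow 2)
    refine h.congr_deriv ?_
    have h1 := (hm r hr).ne'
    have h2 := (hp r).ne'
    simp only [hq, Pi.mul_apply, Pi.pow_apply]
    field_simp
    ring
  have hint := intervalIntegral.integral_eq_sub_of_hasDerivAt hF (hVi.sub hSi)
  rw [intervalIntegral.integral_sub hVi hSi] at hint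
  simp only [hηbc] at hint
  have key : (∫ r in (0 : ℝ)..1,
      (η' r ^ 2 - 15 * (α / (α ^ 2 + r ^ 2)) ^ 2 * η r ^ 2) * r ^ 2)
      = ∫ r in (0 : ℝ)..1, (η' r - q r * η r) ^ 2 * r ^ 2 := by
    linarith
  rw [key]
  refine intervalIntegral.integral_pos zero_lt_one hSc (fun r _ => by positivity) ?_
  by_contra hcon
  push Not at hcon
  obtain ⟨r0, hr0, hne⟩ := hηne
  have hlt : r0 < 1 := lt_of_le_of_ne hr0.2 (fun h => hne (h ▸ hηbc))
  have hsub : ∀ r ∈ Set.Icc r0 1, r ∈ Set.Icc (0 : ℝ) 1 := fun r hr => ⟨hr0.1.trans hr.1, hr.2⟩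
  have hg : ∀ r ∈ Set.Icc (0 : ℝ) 1, HasDerivAt
      (fun r => η r ^ 2 * ((α ^ 2 + r ^ 2) ^ 3 / (α ^ 2 - r ^ 2) ^ 2))
      (2 * η r * (η' r - q r * η r) * ((α ^ 2 + r ^ 2) ^ 3 / (α ^ 2 - r ^ 2) ^ 2)) r := by
    intro r hr
    have h1 := (hm r hr).ne'
    have h2 := (hp r).ne'
    have h := ((hη r hr).pow 2).mul (((hd2 r).pow 3).div ((hd1 r).pow 2) (pow_ne_zero 2 h1))
    refine h.congr_deriv ?_
    simp only [hq, Pi.mul_apply, Pi.pow_apply, Pi.div_apply]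
    field_simp
    ring
  obtain ⟨c, hc, hslope⟩ := exists_hasDerivAt_eq_slope _ _ hlt
    (fun r hr => (hg r (hsub r hr)).continuousAt.continuousWithinAt)
    (fun r hr => hg r (hsub r (Set.Ioo_subset_Icc_self hr)))
  have hc0 : 0 < c := hr0.1.trans_lt hc.1
  have hz : η' c - q c * η c = 0 := by
    have h := hcon c ⟨hc0.le, hc.2.le⟩
    by_contra hn
    have : 0 < (η' c - q c * η c) ^ 2 * c ^ 2 := by positivity
    linarith
  rw [hz, hηbc] at hslope
  have h1 := hm r0 hr0
  have h2 := hp r0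
  have h3 : 0 < η r0 ^ 2 * ((α ^ 2 + r0 ^ 2) ^ 3 / (α ^ 2 - r0 ^ 2) ^ 2) := by positivity
  have h4 : 0 < 1 - r0 := by linarith
  rw [eq_div_iff h4.ne'] at hslope
  simp only [mul_zero, zero_mul] at hslope
  norm_num at hslope
  rcases hslope with h | h | h
  · exact hne h
  · exact h2.ne' h
  · exact h1.ne' h
end

section
/- For every α with 0 < α < 1, the trial function η_T(r) = (1−r²)/(α²+r²)^{3/2} is continuously differentiable on [0,1], satisfies η_T(1) = 0 and η_T'(0) = 0, is not identically zero, and satisfies ∫₀¹ (η_T'(r)² − 15·(α/(α²+r²))²·η_T(r)²)·r² dr < 0. Consequently the principal eigenvalue of the linearization of the radial Lichnerowicz–York equation at the upper-branch solution φ_α is strictly negative, i.e., the upper branch of solutions is unstable. -/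
/-- The trial function `η_T(r) = (1−r²)/(α²+r²)^{3/2}`. -/
noncomputable def etaT (α r : ℝ) : ℝ := (1 - r ^ 2) / (α ^ 2 + r ^ 2) ^ ((3 : ℝ) / 2)

lemma etaT_hasDerivAt (α : ℝ) (h0 : 0 < α) (r : ℝ) :
    HasDerivAt (etaT α) (-r * (2 * α ^ 2 + 3 - r ^ 2) / (α ^ 2 + r ^ 2) ^ ((5 : ℝ) / 2)) r := by
  have hs : 0 < α ^ 2 + r ^ 2 := by positivity
  have h1 : HasDerivAt (fun x : ℝ => 1 - x ^ 2) (-(2 * r)) r := by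
    simpa using (hasDerivAt_pow 2 r).const_sub 1
  have h2 : HasDerivAt (fun x : ℝ => α ^ 2 + x ^ 2) (2 * r) r := by
    simpa using (hasDerivAt_pow 2 r).const_add (α ^ 2)
  have h3 := h2.rpow_const (p := (3 : ℝ) / 2) (Or.inl hs.ne')
  have h4 := h1.div h3 (Real.rpow_pos_of_pos hs _).ne'
  refine h4.congr_deriv ?_
  have e1 : (3 : ℝ) / 2 - 1 = 1 / 2 := by norm_num
  have e3 : (α ^ 2 + r ^ 2) ^ ((3 : ℝ) / 2) = (α ^ 2 + r ^ 2) ^ ((1 : ℝ) / 2) * (α ^ 2 + r ^ 2) := by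
    rw [← Real.rpow_add_one hs.ne']; norm_num
  have e5 : (α ^ 2 + r ^ 2) ^ ((5 : ℝ) / 2) =
      (α ^ 2 + r ^ 2) ^ ((1 : ℝ) / 2) * (α ^ 2 + r ^ 2) * (α ^ 2 + r ^ 2) := by
    rw [← Real.rpow_add_one hs.ne', ← Real.rpow_add_one hs.ne']; norm_num
  rw [e1, e3, e5]
  have hp := Real.rpow_pos_of_pos hs ((1 : ℝ) / 2)
  generalize (α ^ 2 + r ^ 2) ^ ((1 : ℝ) / 2) = p at *
  have hs' := hs.ne'
  field_simp
  ring

lemma integrand_eq (α : ℝ) (h0 : 0 < α) (r : ℝ) :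
    (deriv (etaT α) r ^ 2 - 15 * (α / (α ^ 2 + r ^ 2)) ^ 2 * etaT α r ^ 2) * r ^ 2 =
    (r ^ 2 * (2 * α ^ 2 + 3 - r ^ 2) ^ 2 - 15 * α ^ 2 * (1 - r ^ 2) ^ 2) * r ^ 2 /
      (α ^ 2 + r ^ 2) ^ 5 := by
  have hs : 0 < α ^ 2 + r ^ 2 := by positivity
  rw [(etaT_hasDerivAt α h0 r).deriv, etaT]
  have e3 : ((α ^ 2 + r ^ 2) ^ ((3 : ℝ) / 2)) ^ 2 = (α ^ 2 + r ^ 2) ^ 3 := by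
    rw [← Real.rpow_natCast, ← Real.rpow_mul hs.le, ← Real.rpow_natCast]; norm_num
  have e5 : ((α ^ 2 + r ^ 2) ^ ((5 : ℝ) / 2)) ^ 2 = (α ^ 2 + r ^ 2) ^ 5 := by
    rw [← Real.rpow_natCast, ← Real.rpow_mul hs.le, ← Real.rpow_natCast]; norm_num
  rw [div_pow, div_pow, div_pow, e3, e5]
  have hs' := hs.ne'
  field_simp

lemma F_hasDerivAt (α : ℝ) (h0 : 0 < α) (r : ℝ) :
    HasDerivAt (fun r : ℝ => -(r ^ 3 * (1 - r ^ 2) * (2 * α ^ 2 + 3 - r ^ 2)) / (α ^ 2 + r ^ 2) ^ 4)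
    ((r ^ 2 * (2 * α ^ 2 + 3 - r ^ 2) ^ 2 - 15 * α ^ 2 * (1 - r ^ 2) ^ 2) * r ^ 2 /
      (α ^ 2 + r ^ 2) ^ 5 + 6 * (1 - α ^ 2) * (1 - r ^ 2) * r ^ 2 / (α ^ 2 + r ^ 2) ^ 4) r := by
  have hs : 0 < α ^ 2 + r ^ 2 := by positivity
  have h1 : HasDerivAt (fun x : ℝ => 1 - x ^ 2) (-(2 * r)) r := by
    simpa using (hasDerivAt_pow 2 r).const_sub 1
  have h2 : HasDerivAt (fun x : ℝ => α ^ 2 + x ^ 2) (2 * r) r := by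
    simpa using (hasDerivAt_pow 2 r).const_add (α ^ 2)
  have h3 : HasDerivAt (fun x : ℝ => 2 * α ^ 2 + 3 - x ^ 2) (-(2 * r)) r := by
    simpa using (hasDerivAt_pow 2 r).const_sub (2 * α ^ 2 + 3)
  have h4 := ((((hasDerivAt_pow 3 r).mul h1).mul h3).neg).div (h2.pow 4) (pow_pos hs 4).ne'
  refine h4.congr_deriv ?_
  have hs' := hs.ne'
  simp only [Pi.mul_apply, Pi.neg_apply, Pi.pow_apply]
  field_simp
  push_cast
  ring

/-- Instability of the upper branch: for `0 < α < 1`, the trial function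
`η_T(r) = (1−r²)/(α²+r²)^{3/2}` is continuously differentiable on `[0,1]`, satisfies
`η_T(1) = 0`, `η_T'(0) = 0`, is not identically zero, and has strictly negative
Rayleigh numerator `∫₀¹ (η_T'² − 15(α/(α²+r²))² η_T²) r² dr < 0`; hence the principal
eigenvalue of the linearization at the upper-branch solution `φ_α` is negative. -/
theorem upper_branch_unstable (α : ℝ) (hα0 : 0 < α) (hα1 : α < 1) :
    ContDiffOn ℝ 1 (etaT α) (Set.Icc 0 1) ∧
    etaT α 1 = 0 ∧
    HasDerivAt (etaT α) 0 0 ∧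
    (∃ r ∈ Set.Icc (0 : ℝ) 1, etaT α r ≠ 0) ∧
    (∫ r in (0 : ℝ)..1,
      (deriv (etaT α) r ^ 2 - 15 * (α / (α ^ 2 + r ^ 2)) ^ 2 * etaT α r ^ 2) * r ^ 2)
      < 0 := by
  have hs : ∀ r : ℝ, 0 < α ^ 2 + r ^ 2 := fun r => by positivity
  refine ⟨?_, by simp [etaT], by simpa using etaT_hasDerivAt α hα0 0, ⟨0, by simp, ?_⟩, ?_⟩
  · apply ContDiff.contDiffOn
    unfold etaT
    refine ContDiff.div (by fun_prop) ?_ (fun r => (Real.rpow_pos_of_pos (hs r) _).ne')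
    exact ContDiff.rpow_const_of_ne (by fun_prop) (fun r => (hs r).ne')
  · have := hs 0
    unfold etaT
    have := Real.rpow_pos_of_pos this ((3 : ℝ) / 2)
    exact div_ne_zero (by norm_num) this.ne'
  · simp_rw [integrand_eq α hα0]
    have c1 : Continuous (fun r : ℝ => (r ^ 2 * (2 * α ^ 2 + 3 - r ^ 2) ^ 2 -
        15 * α ^ 2 * (1 - r ^ 2) ^ 2) * r ^ 2 / (α ^ 2 + r ^ 2) ^ 5) :=
      Continuous.div (by fun_prop) (by fun_prop) (fun r => (pow_pos (hs r) 5).ne')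
    have c2 : Continuous (fun r : ℝ =>
        6 * (1 - α ^ 2) * (1 - r ^ 2) * r ^ 2 / (α ^ 2 + r ^ 2) ^ 4) :=
      Continuous.div (by fun_prop) (by fun_prop) (fun r => (pow_pos (hs r) 4).ne')
    have hF := intervalIntegral.integral_eq_sub_of_hasDerivAt (a := 0) (b := 1)
      (fun r _ => F_hasDerivAt α hα0 r) ((c1.add c2).intervalIntegrable 0 1)
    rw [intervalIntegral.integral_add (c1.intervalIntegrable 0 1)
      (c2.intervalIntegrable 0 1)] at hF
    have hpos := intervalIntegral.intervalIntegral_pos_of_pos_on (c2.intervalIntegrable 0 1)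
      (fun r hr => by
        have h1 : 0 < 1 - α ^ 2 := by nlinarith
        have h2 : 0 < 1 - r ^ 2 := by nlinarith [hr.1, hr.2]
        have h3 := hr.1
        have := hs r
        positivity) one_pos
    norm_num at hF
    linarith
end

section
/- Let ρ > 0 and suppose φ : [0,1] → ℝ is continuously differentiable on [0,1], twice differentiable on (0,1], satisfies φ'' + (2/r)φ' + 2πρφ^5 = 0 on (0,1] with φ(1) = 1 and φ'(0) = 0, and let θ : [0,1] → ℝ be continuously differentiable on [0,1], twice differentiable on (0,1], satisfying θ'' + (2/r)θ' + 10πρφ^4 θ = −μθ on (0,1] with θ(1) = 0 and θ'(0) = 0, for some μ ∈ ℝ. Then, writing u = φ − 1, the identity 2π·∫₀¹ ρ·φ(r)^4·θ(r)·(4u(r) − 1)·r² dr = −μ·∫₀¹ θ(r)·u(r)·r² dr holds. -/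
/-- If `φ` solves the radial Lichnerowicz–York equation
`φ'' + (2/r)φ' + 2πρφ⁵ = 0` on `(0,1]` with `φ(1) = 1`, `φ'(0) = 0`, and `θ` is an
eigenfunction of the linearization, `θ'' + (2/r)θ' + 10πρφ⁴θ = −μθ` with `θ(1) = 0`,
`θ'(0) = 0`, then with `u = φ − 1` the identity
`2π ∫₀¹ ρ φ⁴ θ (4u − 1) r² dr = −μ ∫₀¹ θ u r² dr` holds. -/
theorem stability_integral_identity (ρ : ℝ) (hρ : 0 < ρ) (φ θ : ℝ → ℝ) (μ : ℝ)
    (hφ1 : DifferentiableOn ℝ φ (Set.Icc 0 1))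
    (hφ1' : ContinuousOn (deriv φ) (Set.Icc 0 1))
    (hφ2 : DifferentiableOn ℝ (deriv φ) (Set.Ioc 0 1))
    (hφode : ∀ r ∈ Set.Ioc (0 : ℝ) 1,
      deriv (deriv φ) r + (2 / r) * deriv φ r + 2 * Real.pi * ρ * φ r ^ 5 = 0)
    (hφbc1 : φ 1 = 1) (hφbc0 : deriv φ 0 = 0)
    (hθ1 : DifferentiableOn ℝ θ (Set.Icc 0 1))
    (hθ1' : ContinuousOn (deriv θ) (Set.Icc 0 1))
    (hθ2 : DifferentiableOn ℝ (deriv θ) (Set.Ioc 0 1))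
    (hθode : ∀ r ∈ Set.Ioc (0 : ℝ) 1,
      deriv (deriv θ) r + (2 / r) * deriv θ r + 10 * Real.pi * ρ * φ r ^ 4 * θ r
        = -μ * θ r)
    (hθbc1 : θ 1 = 0) (hθbc0 : deriv θ 0 = 0) :
    2 * Real.pi * ∫ r in (0 : ℝ)..1,
        ρ * φ r ^ 4 * θ r * (4 * (φ r - 1) - 1) * r ^ 2 =
      -μ * ∫ r in (0 : ℝ)..1, θ r * (φ r - 1) * r ^ 2 := by
  have cφ := hφ1.continuousOn
  have cθ := hθ1.continuousOn
  have c1 : ContinuousOn (fun r => ρ * φ r ^ 4 * θ r * (4 * (φ r - 1) - 1) * r ^ 2)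
      (Set.Icc 0 1) := by fun_prop
  have c2 : ContinuousOn (fun r => θ r * (φ r - 1) * r ^ 2) (Set.Icc 0 1) := by fun_prop
  have i1 := c1.intervalIntegrable_of_Icc (μ := MeasureTheory.volume) zero_le_one
  have i2 := c2.intervalIntegrable_of_Icc (μ := MeasureTheory.volume) zero_le_one
  have key := intervalIntegral.integral_eq_sub_of_hasDerivAt_of_le (a := 0) (b := 1)
    (f := fun r => r ^ 2 * (deriv θ r * (φ r - 1) - θ r * deriv φ r))
    (f' := fun r => -μ * (θ r * (φ r - 1) * r ^ 2)
      - 2 * Real.pi * (ρ * φ r ^ 4 * θ r * (4 * (φ r - 1) - 1) * r ^ 2))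
    zero_le_one (by fun_prop) ?_ ((i2.const_mul _).sub (i1.const_mul _))
  · rw [intervalIntegral.integral_sub (i2.const_mul _) (i1.const_mul _),
      intervalIntegral.integral_const_mul, intervalIntegral.integral_const_mul] at key
    simp only [hφbc1, hθbc1] at key
    norm_num at key
    linarith
  · intro r hr
    have hn : Set.Icc (0 : ℝ) 1 ∈ nhds r := Icc_mem_nhds hr.1 hr.2
    have hn' : Set.Ioc (0 : ℝ) 1 ∈ nhds r := Ioc_mem_nhds hr.1 hr.2
    have a1 := (hφ1.differentiableAt hn).hasDerivAt
    have a2 := (hφ2.differentiableAt hn').hasDerivAt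
    have b1 := (hθ1.differentiableAt hn).hasDerivAt
    have b2 := (hθ2.differentiableAt hn').hasDerivAt
    have e1 := hφode r ⟨hr.1, hr.2.le⟩
    have e2 := hθode r ⟨hr.1, hr.2.le⟩
    have h0 : r ≠ 0 := hr.1.ne'
    have hx : r * (2 / r) = 2 := by field_simp
    have h := ((hasDerivAt_id r).pow 2).mul ((b2.mul (a1.sub_const 1)).sub (b1.mul a2))
    refine h.congr_deriv ?_
    simp
    linear_combination r ^ 2 * (φ r - 1) * e2 - r ^ 2 * θ r * e1
      - r * (deriv θ r * (φ r - 1) - θ r * deriv φ r) * hx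
end
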